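/- If α ∈ Λ has E-degree n (i.e. α is a top form) and β ∈ Λ has E-degree 2, then ι_ξ²(α) * β = α * ι_ξ²(β). (This is the paper's identity ι_ξ²α∧β = α∧ι_ξ²β for a top-degree form α and a 2-form β, contracted twice with the odd vector field ξ.) -/

import Mathlib

noncomputable section

open ExteriorAlgebra

variable (E G : Type) [AddCommGroup E] [Module ℝ E] [AddCommGroup G] [Module ℝ G]

/-- The ghost generator `θ = ι(0, g)`. -/
def ghost (g : G) : ExteriorAlgebra ℝ (E × G) := ExteriorAlgebra.ι ℝ ((0 : E), g)

/-- The extension `f̃(e, g) = f(e)` of a covector on `E` to `E × G`. -/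
def fTilde (f : Module.Dual ℝ E) : Module.Dual ℝ (E × G) := f.comp (LinearMap.fst ℝ E G)

/-- The odd contraction `ι_ξ x = Σ_i θ_i * ∂_i x`. -/
def iotaXi {k : ℕ} (g : Fin k → G) (f : Fin k → Module.Dual ℝ E) :
    ExteriorAlgebra ℝ (E × G) →ₗ[ℝ] ExteriorAlgebra ℝ (E × G) :=
  ∑ i, (LinearMap.mulLeft ℝ (ghost E G (g i))).comp
    (CliffordAlgebra.contractLeft (fTilde E G (f i)))

/-- The algebra map `Λ(E) → Λ(E × G)` induced by `e ↦ (e, 0)`. -/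
def inclE : ExteriorAlgebra ℝ E →ₐ[ℝ] ExteriorAlgebra ℝ (E × G) :=
  ExteriorAlgebra.lift ℝ ⟨(ExteriorAlgebra.ι ℝ).comp (LinearMap.inl ℝ E G),
    fun _ => ExteriorAlgebra.ι_sq_zero _⟩

/-- `x ∈ Λ(E × G)` has `E`-degree `p` if it is the image of an element of the `p`-th
exterior power of `E` under the algebra map induced by `e ↦ (e, 0)`. -/
def HasEDegree (p : ℕ) (x : ExteriorAlgebra ℝ (E × G)) : Prop :=
  x ∈ Submodule.map (inclE E G).toLinearMap (⋀[ℝ]^p E)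

theorem iotaXi_iota_mul {k : ℕ} (g : Fin k → G) (f : Fin k → Module.Dual ℝ E) (m : E × G)
    (b : ExteriorAlgebra ℝ (E × G)) :
    iotaXi E G g f (ExteriorAlgebra.ι ℝ m * b) =
      iotaXi E G g f (ExteriorAlgebra.ι ℝ m) * b + ExteriorAlgebra.ι ℝ m * iotaXi E G g f b := by
  simp only [iotaXi, LinearMap.sum_apply, LinearMap.comp_apply, LinearMap.mulLeft_apply,
    Finset.sum_mul, Finset.mul_sum, ← Finset.sum_add_distrib]
  refine Finset.sum_congr rfl fun i _ => ?_
  have h1 : CliffordAlgebra.contractLeft (fTilde E G (f i)) (ExteriorAlgebra.ι ℝ m * b) =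
      fTilde E G (f i) m • b - ExteriorAlgebra.ι ℝ m *
        CliffordAlgebra.contractLeft (fTilde E G (f i)) b :=
    CliffordAlgebra.contractLeft_ι_mul _ _ _
  have h2 : CliffordAlgebra.contractLeft (fTilde E G (f i)) (ExteriorAlgebra.ι ℝ m) =
      algebraMap ℝ (ExteriorAlgebra ℝ (E × G)) (fTilde E G (f i) m) :=
    CliffordAlgebra.contractLeft_ι _ _ _
  have h3 : ghost E G (g i) * ExteriorAlgebra.ι ℝ m = -(ExteriorAlgebra.ι ℝ m * ghost E G (g i)) :=
    eq_neg_of_add_eq_zero_left (ExteriorAlgebra.ι_add_mul_swap _ _)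
  rw [h1, h2, mul_sub, ← mul_assoc, h3, mul_assoc _ (algebraMap _ _ _), ← Algebra.smul_def,
    neg_mul, sub_neg_eq_add, mul_assoc]

theorem iotaXi_mul {k : ℕ} (g : Fin k → G) (f : Fin k → Module.Dual ℝ E)
    (a b : ExteriorAlgebra ℝ (E × G)) :
    iotaXi E G g f (a * b) = iotaXi E G g f a * b + a * iotaXi E G g f b := by
  induction a using ExteriorAlgebra.induction generalizing b with
  | algebraMap r =>
    have h : iotaXi E G g f (algebraMap ℝ _ r) = 0 := by
      simp only [iotaXi, LinearMap.sum_apply, LinearMap.comp_apply, LinearMap.mulLeft_apply]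
      refine Finset.sum_eq_zero fun i _ => ?_
      have h2 : CliffordAlgebra.contractLeft (fTilde E G (f i))
        (algebraMap ℝ (ExteriorAlgebra ℝ (E × G)) r) = 0 :=
          CliffordAlgebra.contractLeft_algebraMap _ _ _
      rw [h2, mul_zero]
    rw [h, zero_mul, zero_add, ← Algebra.smul_def, ← Algebra.smul_def, map_smul]
  | ι m => exact iotaXi_iota_mul E G g f m b
  | mul x y hx hy => rw [mul_assoc, hx, hy, hx]; noncomm_ring
  | add x y hx hy => rw [add_mul, map_add, hx, hy, map_add]; noncomm_ring

theorem top_mul_iota [FiniteDimensional ℝ E] (α : ExteriorAlgebra ℝ (E × G))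
    (hα : HasEDegree E G (Module.finrank ℝ E) α) (e : E) :
    α * ExteriorAlgebra.ι ℝ (e, (0 : G)) = 0 := by
  obtain ⟨a, ha, rfl⟩ := hα
  have h0 : a * ExteriorAlgebra.ι ℝ e = 0 := by
    have h1 : a * ExteriorAlgebra.ι ℝ e ∈ ⋀[ℝ]^(Module.finrank ℝ E + 1) E := by
      change _ ∈ (LinearMap.range (ExteriorAlgebra.ι ℝ)) ^ (Module.finrank ℝ E + 1)
      rw [pow_succ]
      exact Submodule.mul_mem_mul ha ⟨e, rfl⟩
    rw [← ExteriorAlgebra.ιMulti_span_fixedDegree] at h1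
    have h2 : Set.range (ExteriorAlgebra.ιMulti ℝ (M := E) (Module.finrank ℝ E + 1)) ⊆ {0} := by
      rintro _ ⟨v, rfl⟩
      refine AlternatingMap.map_linearDependent _ v fun h => ?_
      have := h.fintype_card_le_finrank
      simp at this
    simpa using Submodule.span_mono h2 h1
  have h3 := congrArg (inclE E G) h0
  rw [map_mul, map_zero] at h3
  simpa [inclE] using h3

theorem iotaXi_sq_exchange [FiniteDimensional ℝ E] [FiniteDimensional ℝ G]
    {k : ℕ} (g : Fin k → G) (f : Fin k → Module.Dual ℝ E)
    (α β : ExteriorAlgebra ℝ (E × G))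
    (hα : HasEDegree E G (Module.finrank ℝ E) α) (hβ : HasEDegree E G 2 β) :
    (iotaXi E G g f ^ 2) α * β = α * (iotaXi E G g f ^ 2) β := by
  have key := top_mul_iota E G α hα
  have hgh : ∀ e : E, ∃ m, iotaXi E G g f (ExteriorAlgebra.ι ℝ (e, (0 : G))) =
      ExteriorAlgebra.ι ℝ m := by
    intro e
    refine ⟨∑ i, f i e • ((0 : E), g i), ?_⟩
    simp only [iotaXi, LinearMap.sum_apply, LinearMap.comp_apply, LinearMap.mulLeft_apply, map_sum]
    refine Finset.sum_congr rfl fun i _ => ?_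
    have h2 : CliffordAlgebra.contractLeft (fTilde E G (f i)) (ExteriorAlgebra.ι ℝ (e, (0 : G))) =
      algebraMap ℝ (ExteriorAlgebra ℝ (E × G)) (f i e) :=
      CliffordAlgebra.contractLeft_ι _ _ _
    rw [h2, map_smul, ← Algebra.commutes, ← Algebra.smul_def, ghost]
  have hβ2 : α * β = 0 ∧ α * iotaXi E G g f β = 0 := by
    obtain ⟨b, hb, rfl⟩ := hβ
    change b ∈ (LinearMap.range (ExteriorAlgebra.ι ℝ)) ^ 2 at hb
    rw [pow_two] at hb
    induction hb using Submodule.mul_induction_on' with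
    | mem_mul_mem x hx y hy =>
      obtain ⟨e, rfl⟩ := hx
      obtain ⟨e', rfl⟩ := hy
      have h : (inclE E G).toLinearMap (ExteriorAlgebra.ι ℝ e * ExteriorAlgebra.ι ℝ e') =
          ExteriorAlgebra.ι ℝ (e, (0 : G)) * ExteriorAlgebra.ι ℝ (e', (0 : G)) := by
        simp [inclE]
      rw [h]
      refine ⟨by rw [← mul_assoc, key, zero_mul], ?_⟩
      obtain ⟨m, hm⟩ := hgh e
      rw [iotaXi_mul, mul_add, ← mul_assoc α (ExteriorAlgebra.ι ℝ (e, (0 : G))), key, zero_mul,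
        add_zero, hm, eq_neg_of_add_eq_zero_left (ExteriorAlgebra.ι_add_mul_swap m (e', (0 : G))),
        mul_neg, ← mul_assoc, key, zero_mul, neg_zero]
    | add x hx y hy h1 h2 =>
      simp only [map_add, mul_add, h1.1, h1.2, h2.1, h2.2, add_zero, and_self]
  have e1 := congrArg (iotaXi E G g f) hβ2.1
  have e2 := congrArg (iotaXi E G g f) hβ2.2
  have e3 := congrArg (iotaXi E G g f) e1
  simp only [iotaXi_mul, map_add, map_zero] at e1 e2 e3
  rw [pow_two, Module.End.mul_apply, Module.End.mul_apply]
  rw [e2, add_zero] at e3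
  rw [eq_neg_of_add_eq_zero_left e3, eq_neg_of_add_eq_zero_left e2, neg_neg]
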